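/- arXiv:2009.02664 — 3 statements merged into one kernel-verified Lean document; each statement's English description precedes it below -/
import Mathlib

section
/- Every connected graph G with at least 3 vertices satisfies srd(G) ≤ e(G) − 1, where e(G) is the number of edges of G. -/
open SimpleGraph

/-- `F` is an edge-cut of `G` separating `u` and `v`. -/
def CutsBetween {V : Type*} (G : SimpleGraph V) (u v : V) (F : Finset (Sym2 V)) : Prop :=
  ↑F ⊆ G.edgeSet ∧ ¬ (G.deleteEdges ↑F).Reachable u v

/-- `lam G u v` is the minimum number of edges in an edge-cut of `G` separating `u` and `v`. -/
noncomputable def lam {V : Type*} (G : SimpleGraph V) (u v : V) : ℕ :=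
  sInf {n | ∃ F : Finset (Sym2 V), CutsBetween G u v F ∧ F.card = n}

/-- `c` is a strong rainbow disconnection coloring of `G`: every pair of distinct vertices
admits a rainbow minimum edge-cut separating them. -/
def IsSRDColoring {V : Type*} (G : SimpleGraph V) (c : Sym2 V → ℕ) : Prop :=
  ∀ u v : V, u ≠ v → ∃ F : Finset (Sym2 V),
    CutsBetween G u v F ∧ F.card = lam G u v ∧ Set.InjOn c ↑F

/-- The strong rainbow disconnection number of `G`. -/
noncomputable def srd {V : Type*} (G : SimpleGraph V) : ℕ :=
  sInf {k | ∃ c : Sym2 V → ℕ, (∀ e ∈ G.edgeSet, c e < k) ∧ IsSRDColoring G c}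

theorem SimpleGraph.Connected.exists_adj_of_mem_of_notMem {V : Type*} {G : SimpleGraph V}
    (hG : G.Connected) {S : Set V} {u v : V} (hu : u ∈ S) (hv : v ∉ S) :
    ∃ a ∈ S, ∃ b ∉ S, G.Adj a b := by
  by_contra! hno
  obtain ⟨p⟩ := hG.preconnected u v
  obtain ⟨d, -, h₁, h₂⟩ := p.exists_boundary_dart S hu hv
  exact hno _ h₁ _ h₂ d.adj

section EdgeCuts

variable {V : Type*} [Fintype V]

open Classical in
/-- The set of edges of `G` with exactly one end in `S`. -/
noncomputable def edgeBoundary (G : SimpleGraph V) (S : Set V) : Finset (Sym2 V) :=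
  G.edgeFinset.filter fun e => ∃ a ∈ S, ∃ b ∉ S, e = s(a, b)

theorem mk_mem_edgeBoundary {G : SimpleGraph V} {S : Set V} {a b : V} :
    s(a, b) ∈ edgeBoundary G S ↔ G.Adj a b ∧ ¬(a ∈ S ↔ b ∈ S) := by
  simp only [edgeBoundary, Finset.mem_filter, mem_edgeFinset, mem_edgeSet, Sym2.eq_iff]
  refine and_congr_right fun _ => ⟨?_, fun h => ?_⟩
  · rintro ⟨x, hx, y, hy, ⟨rfl, rfl⟩ | ⟨rfl, rfl⟩⟩ <;> tauto
  · by_cases ha : a ∈ S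
    · exact ⟨a, ha, b, by tauto, by simp⟩
    · exact ⟨b, by tauto, a, ha, by simp⟩

theorem edgeBoundary_compl (G : SimpleGraph V) (S : Set V) :
    edgeBoundary G Sᶜ = edgeBoundary G S := by
  ext e
  induction e with | _ a b
  simp only [mk_mem_edgeBoundary, Set.mem_compl_iff, not_iff_not]

theorem cutsBetween_edgeBoundary (G : SimpleGraph V) {S : Set V} {u v : V}
    (h : ¬(u ∈ S ↔ v ∈ S)) : CutsBetween G u v (edgeBoundary G S) := by
  refine ⟨fun e he => ?_, ?_⟩
  · induction e with | _ a b
    exact (mk_mem_edgeBoundary.1 he).1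
  · rintro ⟨p⟩
    apply h
    clear h
    induction p with
    | nil => rfl
    | cons hadj _ ih =>
      rw [← ih]
      rw [deleteEdges_adj, Finset.mem_coe, mk_mem_edgeBoundary] at hadj
      tauto

theorem CutsBetween.exists_edgeBoundary_subset {G : SimpleGraph V} {u v : V}
    {F : Finset (Sym2 V)} (h : CutsBetween G u v F) :
    ∃ S : Set V, u ∈ S ∧ v ∉ S ∧ edgeBoundary G S ⊆ F := by
  refine ⟨{w | (G.deleteEdges ↑F).Reachable u w}, Reachable.refl u, h.2, fun e he => ?_⟩
  induction e with | _ a b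
  obtain ⟨hadj, hab⟩ := mk_mem_edgeBoundary.1 he
  by_contra hF
  have hab' : (G.deleteEdges ↑F).Adj a b := by
    rw [deleteEdges_adj]
    exact ⟨hadj, hF⟩
  exact hab ⟨fun ha => Reachable.trans ha hab'.reachable,
    fun hb => Reachable.trans hb hab'.symm.reachable⟩

theorem lam_le_card_edgeBoundary (G : SimpleGraph V) {S : Set V} {u v : V}
    (h : ¬(u ∈ S ↔ v ∈ S)) : lam G u v ≤ (edgeBoundary G S).card :=
  Nat.sInf_le ⟨_, cutsBetween_edgeBoundary G h, rfl⟩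

theorem exists_card_edgeBoundary_eq_lam (G : SimpleGraph V) {u v : V} (h : u ≠ v) :
    ∃ S : Set V, u ∈ S ∧ v ∉ S ∧ (edgeBoundary G S).card = lam G u v := by
  have hne : {n | ∃ F : Finset (Sym2 V), CutsBetween G u v F ∧ F.card = n}.Nonempty :=
    ⟨_, _, cutsBetween_edgeBoundary G (S := {u}) (by simpa using h.symm), rfl⟩
  obtain ⟨F, hF, hcard⟩ := Nat.sInf_mem hne
  obtain ⟨S, hu, hv, hS⟩ := hF.exists_edgeBoundary_subset
  exact ⟨S, hu, hv, le_antisymm ((Finset.card_le_card hS).trans hcard.le)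
    (lam_le_card_edgeBoundary G (by tauto))⟩

/-- The cut function of a graph is submodular. -/
theorem card_edgeBoundary_inter_add_union_le (G : SimpleGraph V) (X S : Set V) :
    (edgeBoundary G (X ∩ S)).card + (edgeBoundary G (X ∪ S)).card ≤
      (edgeBoundary G X).card + (edgeBoundary G S).card := by
  classical
  rw [← Finset.card_union_add_card_inter, ← Finset.card_union_add_card_inter (edgeBoundary G X)]
  refine add_le_add (Finset.card_le_card fun e => ?_) (Finset.card_le_card fun e => ?_) <;>
  · induction e with | _ a b
    simp only [Finset.mem_union, Finset.mem_inter, mk_mem_edgeBoundary, Set.mem_inter_iff,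
      Set.mem_union]
    tauto

theorem card_edgeBoundary_inter_le {G : SimpleGraph V} {S X : Set V} {s t : V}
    (hs : s ∈ S) (ht : t ∉ S)
    (hmin : ∀ Y : Set V, ¬(s ∈ Y ↔ t ∈ Y) → (edgeBoundary G S).card ≤ (edgeBoundary G Y).card)
    (hX : t ∉ X) : (edgeBoundary G (X ∩ S)).card ≤ (edgeBoundary G X).card := by
  have h₁ := card_edgeBoundary_inter_add_union_le G X S
  have h₂ := hmin (X ∪ S) (by simp [hs, ht, hX])
  omega

/-- If `S` is a minimum `s`-`t`-cut, then every pair `u`, `v` has a minimum cut that does not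
cross `S`. -/
theorem exists_noncrossing_edgeBoundary {G : SimpleGraph V} {S : Set V} {s t : V}
    (hs : s ∈ S) (ht : t ∉ S)
    (hmin : ∀ Y : Set V, ¬(s ∈ Y ↔ t ∈ Y) → (edgeBoundary G S).card ≤ (edgeBoundary G Y).card)
    {u v : V} (huv : u ≠ v) :
    ∃ X : Set V, ¬(u ∈ X ↔ v ∈ X) ∧ (edgeBoundary G X).card = lam G u v ∧
      (X ⊆ S ∨ X ⊆ Sᶜ) := by
  obtain ⟨X, hu, hv, hX⟩ := exists_card_edgeBoundary_eq_lam G huv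
  suffices ∃ Y : Set V, ¬(u ∈ Y ↔ v ∈ Y) ∧
      (edgeBoundary G Y).card ≤ (edgeBoundary G X).card ∧ (Y ⊆ S ∨ Y ⊆ Sᶜ) by
    obtain ⟨Y, hY, hle, hsub⟩ := this
    exact ⟨Y, hY, le_antisymm (hX ▸ hle) (lam_le_card_edgeBoundary G hY), hsub⟩
  have hmin' : ∀ Y : Set V, ¬(t ∈ Y ↔ s ∈ Y) →
      (edgeBoundary G Sᶜ).card ≤ (edgeBoundary G Y).card := fun Y hY => by
    rw [edgeBoundary_compl]
    exact hmin Y (by tauto)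
  have inter_left (h : t ∉ X) := card_edgeBoundary_inter_le hs ht hmin h
  have inter_right (h : s ∉ X) :=
    card_edgeBoundary_inter_le (S := Sᶜ) ht (by simpa using hs) hmin' h
  have compl_inter_left (h : t ∈ X) :=
    card_edgeBoundary_inter_le (X := Xᶜ) hs ht hmin (by simpa using h)
  have compl_inter_right (h : s ∈ X) :=
    card_edgeBoundary_inter_le (S := Sᶜ) (X := Xᶜ) ht (by simpa using hs) hmin' (by simpa using h)
  rw [edgeBoundary_compl G X] at compl_inter_left compl_inter_right
  by_cases hus : u ∈ S <;> by_cases hvs : v ∈ S <;> by_cases hsX : s ∈ X <;>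
    by_cases htX : t ∈ X <;>
  first
  | (refine ⟨X ∩ S, ?_, inter_left htX, .inl Set.inter_subset_right⟩; simp [*]; done)
  | (refine ⟨X ∩ Sᶜ, ?_, inter_right hsX, .inr Set.inter_subset_right⟩; simp [*]; done)
  | (refine ⟨Xᶜ ∩ S, ?_, compl_inter_left htX, .inl Set.inter_subset_right⟩; simp [*]; done)
  | (refine ⟨Xᶜ ∩ Sᶜ, ?_, compl_inter_right hsX, .inr Set.inter_subset_right⟩; simp [*]; done)
  | (refine ⟨S, ?_, hmin X ?_, .inl subset_rfl⟩ <;> simp [*])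

/-- A set that contains `s` and has smaller boundary than `{s}` spans an edge. -/
theorem exists_adj_of_card_edgeBoundary_lt {G : SimpleGraph V} {S : Set V} {s : V} (hs : s ∈ S)
    (h : (edgeBoundary G S).card < (edgeBoundary G {s}).card) :
    ∃ a ∈ S, ∃ b ∈ S, G.Adj a b := by
  by_contra! hno
  refine h.not_ge (Finset.card_le_card fun e he => ?_)
  induction e with | _ a b
  rw [mk_mem_edgeBoundary] at he ⊢
  have := hno a
  have := hno b
  simp only [Set.mem_singleton_iff] at he
  refine ⟨he.1, fun hab => he.2 ?_⟩
  have := he.1.symm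
  grind

/-- Giving two edges the same color and all others private colors. -/
theorem srd_le_of_pair {G : SimpleGraph V} {e f : Sym2 V} (he : e ∈ G.edgeSet)
    (hf : f ∈ G.edgeSet) (hef : e ≠ f)
    (h : ∀ u v : V, u ≠ v → ∃ S : Set V, ¬(u ∈ S ↔ v ∈ S) ∧
      (edgeBoundary G S).card = lam G u v ∧ ¬(e ∈ edgeBoundary G S ∧ f ∈ edgeBoundary G S)) :
    srd G ≤ Nat.card G.edgeSet - 1 := by
  classical
  have hcard : (G.edgeFinset.erase f).card = Nat.card G.edgeSet - 1 := by
    rw [Finset.card_erase_of_mem (by simpa using hf), Nat.card_eq_fintype_card, edgeFinset_card]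
  obtain ⟨c, hlt, hinj⟩ : ∃ c : Sym2 V → ℕ, (∀ g ∈ G.edgeFinset.erase f,
      c g < Nat.card G.edgeSet - 1) ∧ Set.InjOn c (G.edgeFinset.erase f) := by
    refine ⟨fun g => if hg : g ∈ G.edgeFinset.erase f then
      ((G.edgeFinset.erase f).equivFin ⟨g, hg⟩ : ℕ) else 0,
      fun g hg => ?_, fun g hg g' hg' hgg => ?_⟩
    · simp only [hg, dite_true]
      exact hcard ▸ Fin.is_lt _
    · rw [Finset.mem_coe] at hg hg'
      simp only [hg, hg', dite_true] at hgg
      simpa using (G.edgeFinset.erase f).equivFin.injective (Fin.ext hgg)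
  refine Nat.sInf_le ⟨fun g => if g = f then c e else c g, fun g hg => ?_, fun u v huv => ?_⟩
  · dsimp only
    split_ifs with hgf
    · exact hlt e (by simp [hef, he])
    · exact hlt g (by simp [hgf, hg])
  · obtain ⟨S, hS, hlam, hnot⟩ := h u v huv
    have hcut := cutsBetween_edgeBoundary G hS
    refine ⟨_, hcut, hlam, fun g hg g' hg' hgg => ?_⟩
    have hgE := hcut.1 hg
    have hgE' := hcut.1 hg'
    have key : ∀ x y, x ∈ G.edgeSet → y ∈ G.edgeSet → x ≠ f → y ≠ f → c x = c y → x = y :=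
      fun x y hx hy hxf hyf hxy => hinj (by simp [hx, hxf]) (by simp [hy, hyf]) hxy
    rw [Finset.mem_coe] at hg hg'
    dsimp only at hgg
    split_ifs at hgg with h₁ h₂ h₂
    · rw [h₁, h₂]
    · have := key e g' he hgE' hef h₂ hgg
      subst h₁ this
      exact absurd ⟨hg', hg⟩ hnot
    · have := key g e hgE he h₁ hef hgg
      subst h₂ this
      exact absurd ⟨hg, hg'⟩ hnot
    · exact key g g' hgE hgE' h₁ h₂ hgg

/-- A connected graph on at least three vertices has a vertex incident with two edges. -/
theorem SimpleGraph.Connected.exists_one_lt_card_edgeBoundary {G : SimpleGraph V}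
    (hG : G.Connected) (hV : 3 ≤ Fintype.card V) : ∃ x : V, 1 < (edgeBoundary G {x}).card := by
  obtain ⟨x, y, z, hxy, hxz, hyz⟩ := Fintype.two_lt_card_iff.1 hV
  obtain ⟨a, rfl, b, hb, hab⟩ := hG.exists_adj_of_mem_of_notMem (S := {x}) rfl
    (show y ∉ ({x} : Set V) from hxy.symm)
  obtain ⟨w, hw⟩ : ∃ w, w ∉ ({a, b} : Set V) := by
    by_cases h : b = y
    · exact ⟨z, by simp [h, hxz.symm, hyz.symm]⟩
    · exact ⟨y, by simp [hxy.symm, Ne.symm h]⟩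
  obtain ⟨p, hp, q, hq, hpq⟩ := hG.exists_adj_of_mem_of_notMem (S := {a, b}) (.inl rfl) hw
  simp only [Set.mem_insert_iff, Set.mem_singleton_iff, not_or] at hp hq
  obtain ⟨hqa, hqb⟩ := hq
  obtain rfl | rfl := hp
  · refine ⟨p, Finset.one_lt_card.2 ⟨s(p, b), ?_, s(p, q), ?_, ?_⟩⟩
    · simp [mk_mem_edgeBoundary, hab, hab.ne']
    · simp [mk_mem_edgeBoundary, hpq, hqa]
    · simp [Ne.symm hqb, hpq.ne]
  · refine ⟨p, Finset.one_lt_card.2 ⟨s(p, a), ?_, s(p, q), ?_, ?_⟩⟩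
    · simp [mk_mem_edgeBoundary, hab.symm, hab.ne]
    · simp [mk_mem_edgeBoundary, hpq, hqb]
    · simp [Ne.symm hqa, hpq.ne]

theorem eq_mk_of_mem_edgeBoundary_singleton {G : SimpleGraph V} {x v : V} {e : Sym2 V}
    (hxv : x ≠ v) (hx : e ∈ edgeBoundary G {x}) (hv : e ∈ edgeBoundary G {v}) : e = s(x, v) := by
  induction e with | _ a b
  simp only [mk_mem_edgeBoundary, Set.mem_singleton_iff] at hx hv
  rw [Sym2.eq_iff]
  grind

/-- The case in which every pair of vertices has a star as a minimum cut. -/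
theorem srd_le_of_forall_lam_eq_star {G : SimpleGraph V} (hV : 3 ≤ Fintype.card V)
    (hG : G.Connected)
    (h : ∀ u v : V, u ≠ v → lam G u v = (edgeBoundary G {u}).card ∨
      lam G u v = (edgeBoundary G {v}).card) :
    srd G ≤ Nat.card G.edgeSet - 1 := by
  obtain ⟨y, hy⟩ := hG.exists_one_lt_card_edgeBoundary hV
  have : Nonempty V := ⟨y⟩
  obtain ⟨x, hx⟩ := Finite.exists_max fun v : V => (edgeBoundary G {v}).card
  obtain ⟨e, he, f, hf, hef⟩ := Finset.one_lt_card.1 (hy.trans_le (hx y))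
  have hstar : ∀ v, v ≠ x → ¬(e ∈ edgeBoundary G {v} ∧ f ∈ edgeBoundary G {v}) :=
    fun v hv ⟨h₁, h₂⟩ => hef ((eq_mk_of_mem_edgeBoundary_singleton hv.symm he h₁).trans
      (eq_mk_of_mem_edgeBoundary_singleton hv.symm hf h₂).symm)
  have hedge : ∀ g ∈ edgeBoundary G {x}, g ∈ G.edgeSet := fun g hg => by
    induction g with | _ a b
    exact (mk_mem_edgeBoundary.1 hg).1
  refine srd_le_of_pair (hedge e he) (hedge f hf) hef fun u v huv => ?_
  have hu : ¬(u ∈ ({u} : Set V) ↔ v ∈ ({u} : Set V)) := by simpa using huv.symm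
  have hv : ¬(u ∈ ({v} : Set V) ↔ v ∈ ({v} : Set V)) := by simpa using huv
  have hu' := lam_le_card_edgeBoundary G hu
  have hv' := lam_le_card_edgeBoundary G hv
  have hmu := hx u
  have hmv := hx v
  have huv' := h u v huv
  by_cases hux : u = x
  · subst hux
    exact ⟨{v}, hv, by omega, hstar v huv.symm⟩
  by_cases hvx : v = x
  · subst hvx
    exact ⟨{u}, hu, by omega, hstar u huv⟩
  obtain h' | h' := huv'
  · exact ⟨{u}, hu, h'.symm, hstar u hux⟩
  · exact ⟨{v}, hv, h'.symm, hstar v hvx⟩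

/-- The case in which some pair of vertices has no star as a minimum cut. -/
theorem srd_le_of_lam_ne_star {G : SimpleGraph V} {s t : V} (hst : s ≠ t)
    (hs : lam G s t ≠ (edgeBoundary G {s}).card) (ht : lam G s t ≠ (edgeBoundary G {t}).card) :
    srd G ≤ Nat.card G.edgeSet - 1 := by
  obtain ⟨S, hsS, htS, hS⟩ := exists_card_edgeBoundary_eq_lam G hst
  have hs' := lam_le_card_edgeBoundary G (u := s) (v := t) (S := {s}) (by simpa using hst.symm)
  have ht' := lam_le_card_edgeBoundary G (u := s) (v := t) (S := {t}) (by simpa using hst)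
  obtain ⟨a, ha, b, hb, hab⟩ := exists_adj_of_card_edgeBoundary_lt (G := G) hsS (by omega)
  obtain ⟨c, hc, d, hd, hcd⟩ := exists_adj_of_card_edgeBoundary_lt (G := G) (S := Sᶜ) htS
    (by rw [edgeBoundary_compl]; omega)
  rw [Set.mem_compl_iff] at hc hd
  refine srd_le_of_pair (e := s(a, b)) (f := s(c, d)) hab hcd ?_ fun u v huv => ?_
  · rw [Ne, Sym2.eq_iff]
    rintro (⟨rfl, -⟩ | ⟨rfl, -⟩) <;> contradiction
  · obtain ⟨X, hX, hlam, hsub⟩ := exists_noncrossing_edgeBoundary hsS htS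
      (fun Y hY => hS ▸ lam_le_card_edgeBoundary G hY) huv
    refine ⟨X, hX, hlam, fun ⟨h₁, h₂⟩ => ?_⟩
    rw [mk_mem_edgeBoundary] at h₁ h₂
    obtain hsub | hsub := hsub
    · exact h₂.2 (iff_of_false (fun h => hc (hsub h)) fun h => hd (hsub h))
    · exact h₁.2 (iff_of_false (fun h => hsub h ha) fun h => hsub h hb)

end EdgeCuts

theorem stmt1 {V : Type*} [Fintype V] (G : SimpleGraph V) (hV : 3 ≤ Fintype.card V)
    (hG : G.Connected) :
    srd G ≤ Nat.card G.edgeSet - 1 := by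
  by_cases h : ∀ u v : V, u ≠ v → lam G u v = (edgeBoundary G {u}).card ∨
      lam G u v = (edgeBoundary G {v}).card
  · exact srd_le_of_forall_lam_eq_star hV hG h
  · push Not at h
    obtain ⟨s, t, hst, hs, ht⟩ := h
    exact srd_le_of_lam_ne_star hst hs ht
end

section
/- For a connected graph G with at least 2 vertices, srd(G) = e(G) if and only if G is isomorphic to the path P_2 on two vertices (a single edge). -/
open SimpleGraph

section EdgeCuts

variable {V : Type*} {G : SimpleGraph V} {u v : V} {F : Finset (Sym2 V)}

theorem CutsBetween.symm (h : CutsBetween G u v F) : CutsBetween G v u F :=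
  ⟨h.1, fun hr => h.2 hr.symm⟩

theorem CutsBetween.lam_le_card (h : CutsBetween G u v F) : lam G u v ≤ F.card :=
  Nat.sInf_le ⟨F, h, rfl⟩

theorem lam_comm (G : SimpleGraph V) (u v : V) : lam G u v = lam G v u := by
  unfold lam
  congr 1
  ext n
  exact ⟨fun ⟨F, h, hn⟩ => ⟨F, h.symm, hn⟩, fun ⟨F, h, hn⟩ => ⟨F, h.symm, hn⟩⟩

variable [Fintype V] [DecidableEq V] [DecidableRel G.Adj]

/-- The edges at `u` separate `u` from every other vertex. -/
theorem cutsBetween_incidenceFinset (huv : u ≠ v) :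
    CutsBetween G u v (G.incidenceFinset u) := by
  refine ⟨by simpa using G.incidenceSet_subset u, fun ⟨w⟩ => ?_⟩
  cases w with
  | nil => exact huv rfl
  | cons h _ =>
    rw [deleteEdges_adj] at h
    exact h.2 (by simpa [mk'_mem_incidenceSet_iff] using h.1)

theorem lam_le_degree (huv : u ≠ v) : lam G u v ≤ G.degree u := by
  simpa using (cutsBetween_incidenceFinset (G := G) huv).lam_le_card

theorem exists_minimum_cut (huv : u ≠ v) :
    ∃ F : Finset (Sym2 V), CutsBetween G u v F ∧ F.card = lam G u v :=
  Nat.sInf_mem (s := {n | ∃ F : Finset (Sym2 V), CutsBetween G u v F ∧ F.card = n})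
    ⟨_, _, cutsBetween_incidenceFinset huv, rfl⟩

/-- For every `r ∈ A`, there are edge sets indexed by `A \ {r}`, the one at `w` having at most
`deg w` edges, among which every pair of distinct vertices of `A` finds a minimum cut. -/
theorem exists_minimum_cut_family (G : SimpleGraph V) [DecidableRel G.Adj] (A : Finset V) :
    ∀ r ∈ A, ∃ C : V → Finset (Sym2 V),
      (∀ w ∈ A, w ≠ r → (C w).card ≤ G.degree w) ∧
      ∀ a ∈ A, ∀ b ∈ A, a ≠ b →
        ∃ w ∈ A, w ≠ r ∧ CutsBetween G a b (C w) ∧ (C w).card = lam G a b := by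
  classical
  induction A using Finset.strongInduction with
  | H A ih =>
  intro r hr
  rcases (A.offDiag).eq_empty_or_nonempty with hA | hA
  · have hsub : ∀ a ∈ A, ∀ b ∈ A, a = b := fun a ha b hb => by
      by_contra hab
      exact Finset.notMem_empty (a, b) (hA ▸ Finset.mem_offDiag.2 ⟨ha, hb, hab⟩)
    exact ⟨fun _ => ∅, by simp, fun a ha b hb hab => absurd (hsub a ha b hb) hab⟩
  obtain ⟨⟨u, v⟩, huv, hmin⟩ := Finset.exists_min_image A.offDiag (fun p => lam G p.1 p.2) hA
  obtain ⟨hu, hv, hne⟩ := Finset.mem_offDiag.1 huv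
  replace hmin : ∀ a ∈ A, ∀ b ∈ A, a ≠ b → lam G u v ≤ lam G a b :=
    fun a ha b hb hab => hmin (a, b) (Finset.mem_offDiag.2 ⟨ha, hb, hab⟩)
  obtain ⟨F, hF, hFc⟩ := exists_minimum_cut (G := G) hne
  let R : V → Prop := (G.deleteEdges ↑F).Reachable r
  have hrR : R r := Reachable.refl r
  obtain ⟨s, hs, hsR⟩ : ∃ s ∈ A, ¬ R s := by
    by_contra! h
    exact hF.2 ((h u hu).symm.trans (h v hv))
  have hsr : s ≠ r := fun h => hsR (h ▸ hrR)
  have hcross : ∀ a ∈ A, ∀ b ∈ A, R a → ¬ R b →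
      CutsBetween G a b F ∧ F.card = lam G a b := fun a ha b hb haR hbR => by
    have hcut : CutsBetween G a b F := ⟨hF.1, fun h => hbR (haR.trans h)⟩
    exact ⟨hcut, le_antisymm (hFc ▸ hmin a ha b hb fun h => hbR (h ▸ haR)) hcut.lam_le_card⟩
  obtain ⟨C₁, hdeg₁, hcut₁⟩ := ih (A.filter R)
    (Finset.filter_ssubset.2 ⟨s, hs, hsR⟩) r (by simp [hr, hrR])
  obtain ⟨C₂, hdeg₂, hcut₂⟩ := ih (A.filter (¬ R ·))
    (Finset.filter_ssubset.2 ⟨r, hr, not_not.2 hrR⟩) s (by simp [hs, hsR])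
  simp only [Finset.mem_filter] at hdeg₁ hcut₁ hdeg₂ hcut₂
  refine ⟨fun w => if R w then C₁ w else if w = s then F else C₂ w, ?_, ?_⟩
  · intro w hw hwr
    by_cases hR : R w
    · simpa [hR] using hdeg₁ w ⟨hw, hR⟩ hwr
    · by_cases hws : w = s
      · subst hws
        simpa [hR] using (hFc.trans_le (hmin w hw r hr hwr)).trans (lam_le_degree hwr)
      · simpa [hR, hws] using hdeg₂ w ⟨hw, hR⟩ hws
  · intro a ha b hb hab
    by_cases haR : R a <;> by_cases hbR : R b
    · obtain ⟨w, ⟨hw, hwR⟩, hwr, h⟩ := hcut₁ a ⟨ha, haR⟩ b ⟨hb, hbR⟩ hab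
      exact ⟨w, hw, hwr, by simpa [hwR] using h⟩
    · exact ⟨s, hs, hsr, by simpa [hsR] using hcross a ha b hb haR hbR⟩
    · obtain ⟨h₁, h₂⟩ := hcross b hb a ha hbR haR
      exact ⟨s, hs, hsr, by simpa [hsR] using ⟨h₁.symm, h₂.trans (lam_comm G b a)⟩⟩
    · obtain ⟨w, ⟨hw, hwR⟩, hws, h⟩ := hcut₂ a ⟨ha, haR⟩ b ⟨hb, hbR⟩ hab
      have hwr : w ≠ r := fun h => hwR (h ▸ hrR)
      exact ⟨w, hw, hwr, by simpa [hwR, hws] using h⟩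

/-- Two distinct edges share at most one vertex. -/
theorem sum_degree_choose_two_le (G : SimpleGraph V) [DecidableRel G.Adj] :
    ∑ w, (G.degree w).choose 2 ≤ G.edgeFinset.card.choose 2 := by
  have hdisj : ((Finset.univ : Finset V) : Set V).PairwiseDisjoint
      fun w => (G.incidenceFinset w).powersetCard 2 := by
    intro a _ b _ hab
    refine Finset.disjoint_left.2 fun P ha hb => ?_
    rw [Finset.mem_powersetCard] at ha hb
    have hP : P ⊆ {s(a, b)} := fun x hx => by
      have hxa := ha.1 hx
      have hxb := hb.1 hx
      rw [mem_incidenceFinset] at hxa hxb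
      exact Finset.mem_singleton.2 ((Sym2.mem_and_mem_iff hab).1 ⟨hxa.2, hxb.2⟩)
    have := Finset.card_le_card hP
    rw [ha.2, Finset.card_singleton] at this
    omega
  calc ∑ w, (G.degree w).choose 2
      = (Finset.univ.biUnion fun w => (G.incidenceFinset w).powersetCard 2).card := by
        rw [Finset.card_biUnion hdisj]
        simp [Finset.card_powersetCard]
    _ ≤ (G.edgeFinset.powersetCard 2).card := by
        refine Finset.card_le_card (Finset.biUnion_subset.2 fun w _ => ?_)
        exact Finset.powersetCard_mono (G.incidenceFinset_subset w)
    _ = G.edgeFinset.card.choose 2 := Finset.card_powersetCard _ _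

/-- If some vertex has degree at least two, then there are two edges that need not occur
together in the minimum cuts of `G`. -/
theorem exists_edges_not_both_mem_minimum_cut (hr : 2 ≤ G.degree u) :
    ∃ e ∈ G.edgeSet, ∃ f ∈ G.edgeSet, e ≠ f ∧ ∀ a b : V, a ≠ b →
      ∃ F : Finset (Sym2 V), CutsBetween G a b F ∧ F.card = lam G a b ∧ ¬ (e ∈ F ∧ f ∈ F) := by
  obtain ⟨C, hdeg, hcut⟩ := exists_minimum_cut_family G Finset.univ u (Finset.mem_univ u)
  have hlt : ((Finset.univ.erase u).biUnion fun w => (C w).powersetCard 2).card <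
      (G.edgeFinset.powersetCard 2).card := by
    calc _ ≤ ∑ w ∈ Finset.univ.erase u, ((C w).powersetCard 2).card := Finset.card_biUnion_le
      _ ≤ ∑ w ∈ Finset.univ.erase u, (G.degree w).choose 2 := by
        refine Finset.sum_le_sum fun w hw => ?_
        rw [Finset.card_powersetCard]
        exact Nat.choose_le_choose 2 (hdeg w (Finset.mem_univ w) (Finset.ne_of_mem_erase hw))
      _ < ∑ w, (G.degree w).choose 2 := by
        rw [← Finset.sum_erase_add _ _ (Finset.mem_univ u)]
        exact Nat.lt_add_of_pos_right (Nat.choose_pos hr)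
      _ ≤ G.edgeFinset.card.choose 2 := sum_degree_choose_two_le G
      _ = _ := (Finset.card_powersetCard _ _).symm
  obtain ⟨P, hP, hPC⟩ := Finset.exists_mem_notMem_of_card_lt_card hlt
  obtain ⟨hPE, hP2⟩ := Finset.mem_powersetCard.1 hP
  obtain ⟨e, f, hef, rfl⟩ := Finset.card_eq_two.1 hP2
  refine ⟨e, mem_edgeFinset.1 (hPE (by simp)), f, mem_edgeFinset.1 (hPE (by simp)), hef, ?_⟩
  intro a b hab
  obtain ⟨w, -, hwu, hF, hFc⟩ := hcut a (Finset.mem_univ a) b (Finset.mem_univ b) hab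
  refine ⟨C w, hF, hFc, fun ⟨he, hf⟩ => hPC ?_⟩
  refine Finset.mem_biUnion.2 ⟨w, by simp [hwu], Finset.mem_powersetCard.2 ⟨?_, hP2⟩⟩
  simp [Finset.insert_subset_iff, he, hf]

theorem srd_lt_card_edgeFinset (hr : 2 ≤ G.degree u) : srd G < G.edgeFinset.card := by
  obtain ⟨e, he, f, hf, hef, hcut⟩ := exists_edges_not_both_mem_minimum_cut hr
  let E := G.edgeFinset.erase f
  have hE : E.card + 1 = G.edgeFinset.card :=
    Finset.card_erase_add_one (mem_edgeFinset.2 hf)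
  have heE : e ∈ E := Finset.mem_erase.2 ⟨hef, mem_edgeFinset.2 he⟩
  let i : Sym2 V → ℕ := fun x => if hx : x ∈ E then E.equivFin ⟨x, hx⟩ else 0
  have hi : Set.InjOn i E := fun x hx y hy hxy => by
    rw [Finset.mem_coe] at hx hy
    simpa [i, hx, hy, Fin.val_inj] using hxy
  have hilt : ∀ x ∈ E, i x < E.card := fun x hx => by simp [i, hx]
  let g : Sym2 V → Sym2 V := fun x => if x = f then e else x
  have hg : ∀ x ∈ G.edgeSet, g x ∈ E := fun x hx => by
    by_cases hxf : x = f
    · simpa [g, hxf] using heE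
    · simpa [g, hxf, E] using hx
  suffices srd G ≤ E.card by omega
  refine Nat.sInf_le ⟨fun x => i (g x), fun x hx => hilt _ (hg x hx), fun a b hab => ?_⟩
  obtain ⟨F, hF, hFc, hnot⟩ := hcut a b hab
  refine ⟨F, hF, hFc, fun x hx y hy hxy => ?_⟩
  have hgxy : g x = g y := hi (hg x (hF.1 hx)) (hg y (hF.1 hy)) hxy
  rw [Finset.mem_coe] at hx hy
  by_cases hxf : x = f <;> by_cases hyf : y = f <;>
    simp only [g, hxf, hyf, if_true, if_false] at hgxy
  · exact hxf.trans hyf.symm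
  · subst hgxy hxf
    exact absurd ⟨hy, hx⟩ hnot
  · subst hgxy hyf
    exact absurd ⟨hx, hy⟩ hnot
  · exact hgxy

theorem srd_eq_one_of_card_edgeFinset_eq_one (h : G.edgeFinset.card = 1) : srd G = 1 := by
  obtain ⟨e, he⟩ := Finset.card_eq_one.1 h
  have hmem : ∀ x, x ∈ G.edgeSet ↔ x = e := fun x => by
    rw [← mem_edgeFinset, he, Finset.mem_singleton]
  have hone : 1 ∈ {k | ∃ c : Sym2 V → ℕ, (∀ e ∈ G.edgeSet, c e < k) ∧ IsSRDColoring G c} := by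
    refine ⟨fun _ => 0, by simp, fun a b hab => ?_⟩
    obtain ⟨F, hF, hFc⟩ := exists_minimum_cut (G := G) hab
    exact ⟨F, hF, hFc, fun x hx y hy _ =>
      ((hmem x).1 (hF.1 hx)).trans ((hmem y).1 (hF.1 hy)).symm⟩
  refine le_antisymm (Nat.sInf_le hone) ?_
  obtain ⟨c, hc, -⟩ := Nat.sInf_mem ⟨1, hone⟩
  exact (Nat.zero_le _).trans_lt (hc e ((hmem e).2 rfl))

end EdgeCuts

theorem SimpleGraph.Connected.exists_two_le_degree {V : Type*} [Fintype V]
    {G : SimpleGraph V} [DecidableRel G.Adj] (hG : G.Connected)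
    (hV : 3 ≤ Fintype.card V) : ∃ w, 2 ≤ G.degree w := by
  by_contra! h
  have hsum : ∑ w, G.degree w ≤ ∑ _w : V, 1 :=
    Finset.sum_le_sum fun w _ => Nat.le_of_lt_succ (h w)
  have hm := hG.card_vert_le_card_edgeSet_add_one
  rw [Nat.card_eq_fintype_card, Nat.card_eq_fintype_card, ← edgeFinset_card] at hm
  rw [sum_degrees_eq_twice_card_edges, Finset.sum_const, Finset.card_univ, smul_eq_mul] at hsum
  omega

theorem SimpleGraph.Connected.nonempty_iso_pathGraph_two {V : Type*} [Fintype V]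
    {G : SimpleGraph V} (hG : G.Connected) (hV : Fintype.card V = 2) :
    Nonempty (G ≃g pathGraph 2) := by
  classical
  have htop : G = ⊤ := by
    ext a b
    refine ⟨fun h => h.ne, fun hab => ?_⟩
    have : Nontrivial V := ⟨a, b, hab⟩
    obtain ⟨c, hc⟩ := hG.preconnected.exists_adj_of_nontrivial a
    have huniv : ({a, b} : Finset V) = Finset.univ :=
      Finset.eq_univ_of_card _ (by rw [Finset.card_pair hab, hV])
    have hcb : c ∈ ({a, b} : Finset V) := huniv ▸ Finset.mem_univ c
    rcases Finset.mem_insert.1 hcb with rfl | hcb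
    · exact absurd rfl hc.ne
    · exact Finset.mem_singleton.1 hcb ▸ hc
  rw [htop, pathGraph_two_eq_top]
  exact ⟨Iso.completeGraph (Fintype.equivFinOfCardEq hV)⟩

theorem stmt2 {V : Type*} [Fintype V] (G : SimpleGraph V) (hV : 2 ≤ Fintype.card V)
    (hG : G.Connected) :
    srd G = Nat.card G.edgeSet ↔ Nonempty (G ≃g SimpleGraph.pathGraph 2) := by
  classical
  rw [Nat.card_eq_fintype_card, ← edgeFinset_card]
  constructor
  · intro h
    refine hG.nonempty_iso_pathGraph_two (le_antisymm ?_ hV)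
    by_contra! hV3
    obtain ⟨w, hw⟩ := hG.exists_two_le_degree hV3
    exact (srd_lt_card_edgeFinset hw).ne h
  · rintro ⟨φ⟩
    have hcard : G.edgeFinset.card = 1 := by
      rw [pathGraph_two_eq_top] at φ
      rw [φ.card_edgeFinset_eq, card_edgeFinset_top_eq_card_choose_two]
      rfl
    rw [srd_eq_one_of_card_edgeFinset_eq_one hcard, hcard]
end

section
/- If G is a nontrivial connected graph and B is a block of G for which srd(B) is maximum among all blocks of G, then srd(G) = srd(B). -/
open SimpleGraph

/-- `B` is a block of `G`: a maximal connected subgraph without cut-vertices. -/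
def IsBlock {V : Type*} (G : SimpleGraph V) (B : G.Subgraph) : Prop :=
  B.verts.Nonempty ∧ B.coe.Connected ∧
  (∀ v : B.verts, (B.coe.induce {w | w ≠ v}).Preconnected) ∧
  ∀ B' : G.Subgraph, B ≤ B' → B'.coe.Connected →
    (∀ v : B'.verts, (B'.coe.induce {w | w ≠ v}).Preconnected) → B = B'

/-- `H` is a cycle graph: connected and 2-regular. -/
def IsCycleGraph {W : Type*} (H : SimpleGraph W) : Prop :=
  H.Connected ∧ ∀ v : W, Nat.card (H.neighborSet v) = 2

open Relation

namespace BlockSRD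

variable {V : Type*} {G : SimpleGraph V}

/-- Adjacency in the subgraph `H` after deletion of the vertex `z` (nothing is deleted when
`z = none`). -/
def AdjAvoiding (H : G.Subgraph) (z : Option V) (x y : V) : Prop :=
  H.Adj x y ∧ z ≠ some x ∧ z ≠ some y

/-- `H` is nonempty, connected, and stays connected after deletion of any vertex. -/
def NoCutVertex (H : G.Subgraph) : Prop :=
  H.verts.Nonempty ∧ ∀ z : Option V, ∀ p ∈ H.verts, ∀ q ∈ H.verts, z ≠ some p → z ≠ some q →
    ReflTransGen (AdjAvoiding H z) p q

lemma AdjAvoiding.symm {H : G.Subgraph} {z : Option V} {x y : V} (h : AdjAvoiding H z x y) :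
    AdjAvoiding H z y x :=
  ⟨h.1.symm, h.2.2, h.2.1⟩

lemma AdjAvoiding.mono {H H' : G.Subgraph} (hH : H ≤ H') {z : Option V} {x y : V}
    (h : AdjAvoiding H z x y) : AdjAvoiding H' z x y :=
  ⟨hH.2 h.1, h.2⟩

lemma reflTransGen_symm {H : G.Subgraph} {z : Option V} {x y : V}
    (h : ReflTransGen (AdjAvoiding H z) x y) : ReflTransGen (AdjAvoiding H z) y x := by
  induction h with
  | refl => exact .refl
  | tail _ h ih => exact ih.head h.symm

lemma reflTransGen_mono {H H' : G.Subgraph} (hH : H ≤ H') {z : Option V} {x y : V}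
    (h : ReflTransGen (AdjAvoiding H z) x y) : ReflTransGen (AdjAvoiding H' z) x y :=
  ReflTransGen.mono (fun _ _ h => AdjAvoiding.mono hH h) _ _ h

lemma coe_connected_iff (H : G.Subgraph) (hne : H.verts.Nonempty) :
    H.coe.Connected ↔
      ∀ p ∈ H.verts, ∀ q ∈ H.verts, ReflTransGen (AdjAvoiding H none) p q := by
  constructor
  · intro h p hp q hq
    have := (reachable_iff_reflTransGen _ _).1 (h.preconnected ⟨p, hp⟩ ⟨q, hq⟩)
    exact ReflTransGen.lift (p := AdjAvoiding H none) Subtype.val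
      (fun a b hab => ⟨hab, by simp, by simp⟩) _ _ this
  · intro h
    have : Nonempty H.verts := hne.to_subtype
    refine ⟨?_⟩
    rintro ⟨p, hp⟩ ⟨q, hq⟩
    have key : ∀ q, ReflTransGen (AdjAvoiding H none) p q →
        ∃ hq, H.coe.Reachable ⟨p, hp⟩ ⟨q, hq⟩ := by
      intro q hpq
      induction hpq with
      | refl => exact ⟨hp, .refl _⟩
      | tail _ h ih =>
        obtain ⟨_, ih⟩ := ih
        exact ⟨H.edge_vert h.1.symm, ih.trans (Adj.reachable h.1)⟩
    exact (key q (h p hp q hq)).2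

lemma induce_preconnected_iff (H : G.Subgraph) (v : H.verts) :
    (H.coe.induce {w | w ≠ v}).Preconnected ↔
      ∀ p ∈ H.verts, ∀ q ∈ H.verts, some v.1 ≠ some p → some v.1 ≠ some q →
        ReflTransGen (AdjAvoiding H (some v.1)) p q := by
  constructor
  · intro h p hp q hq hvp hvq
    have := (reachable_iff_reflTransGen _ _).1 (h ⟨⟨p, hp⟩, fun h => hvp (by rw [← h])⟩
      ⟨⟨q, hq⟩, fun h => hvq (by rw [← h])⟩)
    refine ReflTransGen.lift (p := AdjAvoiding H (some v.1))
      (fun x : {w | w ≠ v} => x.1.1)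
      (fun a b hab => ⟨hab, fun h => a.2 ?_, fun h => b.2 ?_⟩) _ _ this
    · exact Subtype.ext (Option.some.inj h).symm
    · exact Subtype.ext (Option.some.inj h).symm
  · intro h
    rintro ⟨⟨p, hp⟩, hpv⟩ ⟨⟨q, hq⟩, hqv⟩
    have key : ∀ q, ReflTransGen (AdjAvoiding H (some v.1)) p q →
        ∃ hq hqv, (H.coe.induce {w | w ≠ v}).Reachable ⟨⟨p, hp⟩, hpv⟩ ⟨⟨q, hq⟩, hqv⟩ := by
      intro q hpq
      induction hpq with
      | refl => exact ⟨hp, hpv, .refl _⟩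
      | tail _ h ih =>
        obtain ⟨_, _, ih⟩ := ih
        exact ⟨H.edge_vert h.1.symm, fun e => h.2.2 (by rw [← e]), ih.trans (Adj.reachable h.1)⟩
    refine (key q (h p hp q hq ?_ ?_)).2.2
    · exact fun e => hpv (Subtype.ext (Option.some.inj e).symm)
    · exact fun e => hqv (Subtype.ext (Option.some.inj e).symm)

lemma noCutVertex_iff (H : G.Subgraph) :
    NoCutVertex H ↔ H.verts.Nonempty ∧ H.coe.Connected ∧
      ∀ v : H.verts, (H.coe.induce {w | w ≠ v}).Preconnected := by
  refine and_congr_right fun hne => ?_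
  rw [coe_connected_iff H hne]
  simp only [induce_preconnected_iff]
  constructor
  · exact fun h => ⟨fun p hp q hq => h none p hp q hq (by simp) (by simp), fun v => h _⟩
  · rintro ⟨h₁, h₂⟩ z p hp q hq hzp hzq
    by_cases hz : ∃ v : H.verts, z = some v.1
    · obtain ⟨v, rfl⟩ := hz
      exact h₂ v p hp q hq hzp hzq
    · refine ReflTransGen.mono (fun x y hxy => ⟨hxy.1, ?_, ?_⟩) _ _ (h₁ p hp q hq)
      · exact fun e => hz ⟨⟨x, H.edge_vert hxy.1⟩, e⟩
      · exact fun e => hz ⟨⟨y, H.edge_vert hxy.1.symm⟩, e⟩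

lemma isBlock_iff_maximal (B : G.Subgraph) : IsBlock G B ↔ Maximal NoCutVertex B := by
  constructor
  · rintro ⟨hne, hc, hv, hmax⟩
    refine ⟨(noCutVertex_iff B).2 ⟨hne, hc, hv⟩, fun B' hB' hle => ?_⟩
    obtain ⟨_, hc', hv'⟩ := (noCutVertex_iff B').1 hB'
    exact (hmax B' hle hc' hv').ge
  · intro h
    obtain ⟨hne, hc, hv⟩ := (noCutVertex_iff B).1 h.1
    refine ⟨hne, hc, hv, fun B' hle hc' hv' => ?_⟩
    exact h.eq_of_le ((noCutVertex_iff B').2 ⟨hne.mono hle.1, hc', hv'⟩) hle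

lemma NoCutVertex.extend {H H' : G.Subgraph} (hH : NoCutVertex H) (hle : H ≤ H')
    (h : ∀ z : Option V, ∀ w ∈ H'.verts, z ≠ some w →
      ∃ s ∈ H.verts, z ≠ some s ∧ ReflTransGen (AdjAvoiding H' z) w s) : NoCutVertex H' := by
  refine ⟨hH.1.mono hle.1, fun z p hp q hq hzp hzq => ?_⟩
  obtain ⟨s, hs, hzs, hps⟩ := h z p hp hzp
  obtain ⟨t, ht, hzt, hqt⟩ := h z q hq hzq
  exact (hps.trans (reflTransGen_mono hle (hH.2 z s hs t ht hzs hzt))).trans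
    (reflTransGen_symm hqt)

lemma NoCutVertex.sup {H K : G.Subgraph} (hH : NoCutVertex H) (hK : NoCutVertex K) {x y : V}
    (hxy : x ≠ y) (hxH : x ∈ H.verts) (hyH : y ∈ H.verts) (hxK : x ∈ K.verts)
    (hyK : y ∈ K.verts) : NoCutVertex (H ⊔ K) := by
  refine hH.extend le_sup_left fun z w hw hzw => ?_
  rcases hw with hw | hw
  · exact ⟨w, hw, hzw, .refl⟩
  · by_cases hzx : z = some x
    · have hzy : z ≠ some y := fun h => hxy (Option.some.inj (hzx.symm.trans h))
      exact ⟨y, hyH, hzy, reflTransGen_mono le_sup_right (hK.2 z w hw y hyK hzw hzy)⟩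
    · exact ⟨x, hxH, hzx, reflTransGen_mono le_sup_right (hK.2 z w hw x hxK hzw hzx)⟩

lemma reflTransGen_of_walk {H : G.Subgraph} {z : Option V} {a b : V} (p : G.Walk a b)
    (hp : p.toSubgraph ≤ H) (hz : ∀ x ∈ p.support, z ≠ some x) :
    ReflTransGen (AdjAvoiding H z) a b := by
  induction p with
  | nil => exact .refl
  | cons h p ih =>
    have hle := sup_le_iff.1 hp
    refine .head ⟨hle.1.2 (by simp), ?_, ?_⟩ (ih hle.2 fun x hx => hz x (by simp [hx]))
    · exact hz _ (by simp)
    · exact hz _ (by simp)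

lemma NoCutVertex.sup_path {H : G.Subgraph} (hH : NoCutVertex H) {a b : V} (ha : a ∈ H.verts)
    (hb : b ∈ H.verts) (p : G.Walk a b) (hp : p.IsPath) : NoCutVertex (H ⊔ p.toSubgraph) := by
  classical
  refine hH.extend le_sup_left fun z w hw hzw => ?_
  rcases hw with hw | hw
  · exact ⟨w, hw, hzw, .refl⟩
  have hws : w ∈ p.support := by simpa using hw
  have hspec := p.take_spec hws
  have hsub : (p.takeUntil w hws).toSubgraph ⊔ (p.dropUntil w hws).toSubgraph = p.toSubgraph := by
    rw [← Walk.toSubgraph_append, hspec]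
  by_cases hz : ∀ x ∈ (p.takeUntil w hws).support, z ≠ some x
  · exact ⟨a, ha, hz a (by simp), reflTransGen_symm (reflTransGen_of_walk _
      ((le_sup_left.trans hsub.le).trans le_sup_right) hz)⟩
  · push Not at hz
    obtain ⟨x, hx, rfl⟩ := hz
    have hz' : ∀ y ∈ (p.dropUntil w hws).support, some x ≠ some y := by
      rintro y hy h
      obtain rfl := Option.some.inj h
      have hnd := hp.support_nodup
      rw [← hspec, Walk.support_append] at hnd
      have hdisj := (List.nodup_append'.1 hnd).2.2
      rw [← Walk.cons_tail_support] at hy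
      rcases List.mem_cons.1 hy with rfl | hy
      · exact hzw rfl
      · exact hdisj hx hy
    exact ⟨b, hb, hz' b (by simp), reflTransGen_of_walk _
      ((le_sup_right.trans hsub.le).trans le_sup_right) hz'⟩

lemma eq_of_reachable_deleteEdges {B : G.Subgraph} (hB : Maximal NoCutVertex B) {a b : V}
    (ha : a ∈ B.verts) (hb : b ∈ B.verts) (h : (G.deleteEdges B.edgeSet).Reachable a b) :
    a = b := by
  obtain ⟨p, hp⟩ := h.exists_isPath
  let q := p.mapLe (deleteEdges_le (G := G) B.edgeSet)
  have hq : q.IsPath := (Walk.isPath_mapLe _).2 hp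
  have hle : q.toSubgraph ≤ B :=
    le_sup_right.trans (hB.2 (hB.1.sup_path ha hb q hq) le_sup_left)
  cases p with
  | nil => rfl
  | @cons _ c _ h p =>
    have h1 : q.toSubgraph.Adj a c := by simp [q]
    have h2 := (deleteEdges_adj.1 h).2
    exact absurd (hle.2 h1) h2

lemma eq_of_common_edge {B C : G.Subgraph} (hB : Maximal NoCutVertex B)
    (hC : Maximal NoCutVertex C) {e : Sym2 V} (heB : e ∈ B.edgeSet) (heC : e ∈ C.edgeSet) :
    B = C := by
  induction e with
  | _ x y =>
    have h : NoCutVertex (B ⊔ C) := hB.1.sup hC.1 (G.ne_of_adj (B.adj_sub heB))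
      (B.edge_vert heB) (B.edge_vert (Subgraph.Adj.symm heB)) (C.edge_vert heC) (C.edge_vert (Subgraph.Adj.symm heC))
    exact (hB.eq_of_le h le_sup_left).trans (hC.eq_of_le h le_sup_right).symm

lemma noCutVertex_subgraphOfAdj {x y : V} (h : G.Adj x y) :
    NoCutVertex (G.subgraphOfAdj h) := by
  refine ⟨⟨x, by simp⟩, fun z p hp q hq hzp hzq => ?_⟩
  by_cases hpq : p = q
  · exact hpq ▸ .refl
  · refine .single ⟨?_, hzp, hzq⟩
    simp only [subgraphOfAdj_verts, Set.mem_insert_iff, Set.mem_singleton_iff] at hp hq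
    rcases hp with rfl | rfl <;> rcases hq with rfl | rfl <;> simp_all

lemma exists_maximal_noCutVertex_mem_edgeSet [Finite V] {x y : V} (h : G.Adj x y) :
    ∃ B : G.Subgraph, Maximal NoCutVertex B ∧ B.Adj x y := by
  obtain ⟨B, hle, hB⟩ := (Set.toFinite {H : G.Subgraph | NoCutVertex H}).exists_le_maximal
    (noCutVertex_subgraphOfAdj h)
  exact ⟨B, hB, hle.2 (by simp)⟩

/-- A walk towards `v` that meets `B` can be cut down to the part after its last edge in `B`. -/
lemma exists_suffix_avoiding {B : G.Subgraph} {w v : V} (q : G.Walk w v) :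
    (G.deleteEdges B.edgeSet).Reachable w v ∨
      ∃ b ∈ B.verts, (G.deleteEdges B.edgeSet).Reachable b v ∧
        ∃ q' : G.Walk b v, q'.length ≤ q.length := by
  induction q with
  | nil => exact .inl (.refl _)
  | @cons u w v h q ih =>
    rcases ih with ih | ⟨b, hb, hbv, q', hq'⟩
    · by_cases hB : B.Adj u w
      · exact .inr ⟨w, B.edge_vert hB.symm, ih, q, by simp⟩
      · exact .inl (.trans (Adj.reachable (deleteEdges_adj.2 ⟨h, hB⟩)) ih)
    · exact .inr ⟨b, hb, hbv, q', hq'.trans (by simp)⟩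

lemma reachable_deleteEdges_of_ne {B C : G.Subgraph} (hB : Maximal NoCutVertex B)
    (hC : Maximal NoCutVertex C) (hBC : B ≠ C) {x y : V} (hx : x ∈ B.verts) (hy : y ∈ B.verts) :
    (G.deleteEdges C.edgeSet).Reachable x y := by
  rw [reachable_iff_reflTransGen]
  refine ReflTransGen.mono (fun s t hst => ?_) _ _ (hB.1.2 none x hx y hy (by simp) (by simp))
  exact deleteEdges_adj.2 ⟨B.adj_sub hst.1, fun h => hBC (eq_of_common_edge hB hC hst.1 h)⟩

lemma exists_block_separated [Finite V] (F : Set (Sym2 V)) (n : ℕ) :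
    ∀ {u v : V} (p : G.Walk u v), p.length ≤ n → ¬ (G.deleteEdges F).Reachable u v →
      ∃ B : G.Subgraph, Maximal NoCutVertex B ∧ ∃ a ∈ B.verts, ∃ b ∈ B.verts,
        ¬ (G.deleteEdges F).Reachable a b ∧ (G.deleteEdges B.edgeSet).Reachable u a ∧
        (G.deleteEdges B.edgeSet).Reachable b v := by
  induction n with
  | zero =>
    intro u v p hp hF
    cases p with
    | nil => exact absurd (.refl _) hF
    | cons h p => simp at hp
  | succ n ih =>
    intro u v p hp hF
    cases p with
    | nil => exact absurd (.refl _) hF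
    | @cons _ w _ h p =>
      obtain ⟨B, hB, huw⟩ := exists_maximal_noCutVertex_mem_edgeSet h
      have hu := B.edge_vert huw
      have hw := B.edge_vert huw.symm
      have hpn : p.length ≤ n := by simpa using hp
      obtain ⟨b, hb, hbv, q, hq⟩ : ∃ b ∈ B.verts, (G.deleteEdges B.edgeSet).Reachable b v ∧
          ∃ q : G.Walk b v, q.length ≤ p.length := by
        rcases exists_suffix_avoiding (B := B) p with h | h
        · exact ⟨w, hw, h, p, le_rfl⟩
        · exact h
      by_cases hub : (G.deleteEdges F).Reachable u b
      · obtain ⟨C, hC, a, ha, b', hb', hab, hba, hbv'⟩ :=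
          ih q (hq.trans hpn) fun h => hF (hub.trans h)
        by_cases hBC : B = C
        · subst hBC
          have h1 := eq_of_reachable_deleteEdges hB hb ha hba
          have h2 := eq_of_reachable_deleteEdges hB hb hb' (hbv.trans hbv'.symm)
          exact absurd (h1 ▸ h2 ▸ .refl _) hab
        · exact ⟨C, hC, a, ha, b', hb', hab,
            (reachable_deleteEdges_of_ne hB hC hBC hu hb).trans hba, hbv'⟩
      · exact ⟨B, hB, u, hu, b, hb, hub, .refl _, hbv⟩

/-- The edges of `G` coming from a set of edges of the subgraph `B`. -/
def liftEdges (B : G.Subgraph) (F : Finset (Sym2 B.verts)) : Finset (Sym2 V) :=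
  F.map ⟨Sym2.map Subtype.val, Sym2.map.injective Subtype.val_injective⟩

lemma mem_liftEdges {B : G.Subgraph} {F : Finset (Sym2 B.verts)} {e : Sym2 V} :
    e ∈ liftEdges B F ↔ ∃ f ∈ F, Sym2.map Subtype.val f = e := by
  simp [liftEdges]

lemma mem_edgeSet_of_mem_coe {B : G.Subgraph} {f : Sym2 B.verts} (hf : f ∈ B.coe.edgeSet) :
    Sym2.map Subtype.val f ∈ B.edgeSet := by
  induction f with
  | _ x y => exact hf

lemma liftEdges_subset {B : G.Subgraph} {F : Finset (Sym2 B.verts)}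
    (hF : ↑F ⊆ B.coe.edgeSet) : ↑(liftEdges B F) ⊆ B.edgeSet := by
  intro e he
  obtain ⟨f, hf, rfl⟩ := mem_liftEdges.1 he
  exact mem_edgeSet_of_mem_coe (hF hf)

lemma cutsBetween_liftEdges {B : G.Subgraph} (hB : Maximal NoCutVertex B) {a b : B.verts}
    {F : Finset (Sym2 B.verts)} (hF : CutsBetween B.coe a b F) :
    CutsBetween G a.1 b.1 (liftEdges B F) := by
  refine ⟨(liftEdges_subset hF.1).trans B.edgeSet_subset, fun h => hF.2 ?_⟩
  have key : ∀ x, ReflTransGen (G.deleteEdges ↑(liftEdges B F)).Adj a.1 x →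
      ∃ a' : B.verts, (B.coe.deleteEdges ↑F).Reachable a a' ∧
        (G.deleteEdges B.edgeSet).Reachable a'.1 x := by
    intro x hx
    induction hx with
    | refl => exact ⟨a, .refl _, .refl _⟩
    | @tail x y _ hxy ih =>
      obtain ⟨a', haa', hax⟩ := ih
      obtain ⟨hG, hnF⟩ := deleteEdges_adj.1 hxy
      by_cases hBxy : B.Adj x y
      · have hx := B.edge_vert hBxy
        have hy := B.edge_vert hBxy.symm
        obtain rfl : a' = ⟨x, hx⟩ := Subtype.ext (eq_of_reachable_deleteEdges hB a'.2 hx hax)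
        refine ⟨⟨y, hy⟩, haa'.trans (Adj.reachable (deleteEdges_adj.2 ⟨hBxy, fun hm => ?_⟩)),
          .refl _⟩
        exact hnF (mem_liftEdges.2 ⟨_, hm, rfl⟩)
      · exact ⟨a', haa', hax.trans (Adj.reachable (deleteEdges_adj.2 ⟨hG, hBxy⟩))⟩
  obtain ⟨a', haa', hab⟩ := key b.1 ((reachable_iff_reflTransGen _ _).1 h)
  obtain rfl : a' = b := Subtype.ext (eq_of_reachable_deleteEdges hB a'.2 b.2 hab)
  exact haa'

lemma exists_cutsBetween_coe (B : G.Subgraph) {a b : B.verts} {F : Finset (Sym2 V)}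
    (hF : ¬ (G.deleteEdges ↑F).Reachable a.1 b.1) :
    ∃ F' : Finset (Sym2 B.verts), CutsBetween B.coe a b F' ∧ liftEdges B F' ⊆ F := by
  classical
  refine ⟨(F.preimage (Sym2.map Subtype.val)
    (Sym2.map.injective Subtype.val_injective).injOn).filter (· ∈ B.coe.edgeSet),
    ⟨fun e he => (Finset.mem_filter.1 he).2, fun h => hF ?_⟩, ?_⟩
  · rw [reachable_iff_reflTransGen] at h ⊢
    refine ReflTransGen.lift Subtype.val (fun x y hxy => ?_) _ _ h
    obtain ⟨hB, hn⟩ := deleteEdges_adj.1 hxy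
    refine deleteEdges_adj.2 ⟨B.adj_sub hB, fun hm => hn ?_⟩
    exact Finset.mem_filter.2 ⟨Finset.mem_preimage.2 hm, hB⟩
  · intro e he
    obtain ⟨f, hf, rfl⟩ := mem_liftEdges.1 he
    exact Finset.mem_preimage.1 (Finset.mem_filter.1 hf).1

lemma card_liftEdges (B : G.Subgraph) (F : Finset (Sym2 B.verts)) :
    (liftEdges B F).card = F.card :=
  Finset.card_map _

lemma lam_le_card {W : Type*} {H : SimpleGraph W} {u v : W} {F : Finset (Sym2 W)}
    (hF : CutsBetween H u v F) : lam H u v ≤ F.card :=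
  Nat.sInf_le ⟨F, hF, rfl⟩

lemma exists_minimum_cut {W : Type*} [Finite W] (H : SimpleGraph W) {u v : W} (huv : u ≠ v) :
    ∃ F : Finset (Sym2 W), CutsBetween H u v F ∧ F.card = lam H u v := by
  refine Nat.sInf_mem (s := {n | ∃ F : Finset (Sym2 W), CutsBetween H u v F ∧ F.card = n})
    ⟨_, (Set.toFinite H.edgeSet).toFinset, ⟨by simp, ?_⟩, rfl⟩
  rw [Set.Finite.coe_toFinset, deleteEdges_eq_bot.2 subset_rfl]
  simpa using huv

lemma exists_srd_coloring {W : Type*} [Finite W] (H : SimpleGraph W) :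
    ∃ c : Sym2 W → ℕ, (∀ e ∈ H.edgeSet, c e < srd H) ∧ IsSRDColoring H c := by
  obtain ⟨n, ⟨f⟩⟩ := Finite.exists_equiv_fin (Sym2 W)
  refine Nat.sInf_mem
    (s := {k | ∃ c : Sym2 W → ℕ, (∀ e ∈ H.edgeSet, c e < k) ∧ IsSRDColoring H c})
    ⟨n, fun e => f e, fun e _ => (f e).2, fun u v huv => ?_⟩
  obtain ⟨F, hF, hcard⟩ := exists_minimum_cut H huv
  exact ⟨F, hF, hcard, (Fin.val_injective.comp f.injective).injOn⟩

lemma srd_le {W : Type*} {H : SimpleGraph W} {k : ℕ} {c : Sym2 W → ℕ}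
    (hc : ∀ e ∈ H.edgeSet, c e < k) (hsrd : IsSRDColoring H c) : srd H ≤ k :=
  Nat.sInf_le ⟨c, hc, hsrd⟩

lemma srd_block_le [Finite V] {B : G.Subgraph} (hB : Maximal NoCutVertex B) :
    srd B.coe ≤ srd G := by
  obtain ⟨c, hc, hsrd⟩ := exists_srd_coloring G
  refine srd_le (c := c ∘ Sym2.map Subtype.val)
    (fun e he => hc _ (B.edgeSet_subset (mem_edgeSet_of_mem_coe he))) fun a b hab => ?_
  obtain ⟨F, hF, hcard, hinj⟩ := hsrd a.1 b.1 (Subtype.val_injective.ne hab)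
  obtain ⟨F', hF', hsub⟩ := exists_cutsBetween_coe B hF.2
  refine ⟨F', hF', (lam_le_card hF').antisymm' ?_, ?_⟩
  · obtain ⟨M, hM, hMcard⟩ := exists_minimum_cut B.coe hab
    calc F'.card = (liftEdges B F').card := (card_liftEdges B F').symm
      _ ≤ F.card := Finset.card_le_card hsub
      _ = lam G a b := hcard
      _ ≤ (liftEdges B M).card := lam_le_card (cutsBetween_liftEdges hB hM)
      _ = lam B.coe a b := (card_liftEdges B M).trans hMcard
  · refine hinj.comp (Sym2.map.injective Subtype.val_injective).injOn fun f hf => ?_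
    exact hsub (mem_liftEdges.2 ⟨f, hf, rfl⟩)

lemma srd_le_of_blocks [Finite V] (hG : G.Connected) {k : ℕ}
    (hk : ∀ B : G.Subgraph, Maximal NoCutVertex B → srd B.coe ≤ k) : srd G ≤ k := by
  classical
  choose d hd hsrd using fun B : G.Subgraph => exists_srd_coloring B.coe
  let c : Sym2 V → ℕ := fun e =>
    if h : ∃ B : G.Subgraph, Maximal NoCutVertex B ∧ e ∈ B.edgeSet then
      Function.extend (Sym2.map Subtype.val) (d h.choose) 0 e
    else 0
  have hc : ∀ B : G.Subgraph, Maximal NoCutVertex B → ∀ f ∈ B.coe.edgeSet,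
      c (Sym2.map Subtype.val f) = d B f := by
    intro B hB f hf
    have hfB := mem_edgeSet_of_mem_coe hf
    have h : ∃ B : G.Subgraph, Maximal NoCutVertex B ∧ Sym2.map Subtype.val f ∈ B.edgeSet :=
      ⟨B, hB, hfB⟩
    have hBC : h.choose = B := eq_of_common_edge h.choose_spec.1 hB h.choose_spec.2 hfB
    simp only [c, dif_pos h]
    rw [hBC]
    exact (Sym2.map.injective Subtype.val_injective).extend_apply _ _ _
  refine srd_le (c := c) (fun e he => ?_) fun u v huv => ?_
  · induction e with
    | _ x y =>
      obtain ⟨B, hB, hxy⟩ := exists_maximal_noCutVertex_mem_edgeSet (G := G) he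
      have hf : s(⟨x, B.edge_vert hxy⟩, ⟨y, B.edge_vert hxy.symm⟩) ∈ B.coe.edgeSet := hxy
      have := hc B hB _ hf
      rw [Sym2.map_mk] at this
      exact (this.trans_lt (hd B _ hf)).trans_le (hk B hB)
  · obtain ⟨M, hM, hMcard⟩ := exists_minimum_cut G huv
    obtain ⟨p⟩ := hG.preconnected u v
    obtain ⟨B, hB, a, ha, b, hb, hab, hua, hbv⟩ := exists_block_separated ↑M _ p le_rfl hM.2
    have hne : a ≠ b := fun h => hab (h ▸ .refl _)
    obtain ⟨F, hF, hcard, hinj⟩ := hsrd B ⟨a, ha⟩ ⟨b, hb⟩ (by simpa using hne)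
    have hsubB := liftEdges_subset hF.1
    have hmono : G.deleteEdges B.edgeSet ≤ G.deleteEdges ↑(liftEdges B F) :=
      deleteEdges_anti hsubB
    have hcut := cutsBetween_liftEdges hB hF
    have hcut' : CutsBetween G u v (liftEdges B F) :=
      ⟨hcut.1, fun h => hcut.2 (((hua.mono hmono).symm.trans h).trans (hbv.mono hmono).symm)⟩
    refine ⟨liftEdges B F, hcut', (lam_le_card hcut').antisymm' ?_, ?_⟩
    · obtain ⟨M', hM', hsub⟩ := exists_cutsBetween_coe B (a := ⟨a, ha⟩) (b := ⟨b, hb⟩) hab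
      calc (liftEdges B F).card = lam B.coe ⟨a, ha⟩ ⟨b, hb⟩ := (card_liftEdges B F).trans hcard
        _ ≤ M'.card := lam_le_card hM'
        _ = (liftEdges B M').card := (card_liftEdges B M').symm
        _ ≤ M.card := Finset.card_le_card hsub
        _ = lam G u v := hMcard
    · intro e he e' he' hee
      obtain ⟨f, hf, rfl⟩ := mem_liftEdges.1 he
      obtain ⟨f', hf', rfl⟩ := mem_liftEdges.1 he'
      rw [hc B hB f (hF.1 hf), hc B hB f' (hF.1 hf')] at hee
      rw [hinj hf hf' hee]

end BlockSRD

theorem stmt6 {V : Type*} [Fintype V] (G : SimpleGraph V)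
    (hG : G.Connected) (hGe : G.edgeSet.Nonempty)
    (B : G.Subgraph) (hB : IsBlock G B)
    (hmax : ∀ B' : G.Subgraph, IsBlock G B' → srd B'.coe ≤ srd B.coe) :
    srd G = srd B.coe := by
  refine le_antisymm (BlockSRD.srd_le_of_blocks hG fun B' hB' => ?_)
    (BlockSRD.srd_block_le ((BlockSRD.isBlock_iff_maximal B).1 hB))
  exact hmax B' ((BlockSRD.isBlock_iff_maximal B').2 hB')
end
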